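/- arXiv:2102.10924 — 2 statements merged into one kernel-verified Lean document; each statement's English description precedes it below -/
import Mathlib

section
/- Let f : X → [0,∞] be proper, convex, and lower semicontinuous with inf f > 0 and argmin f ≠ ∅, let κ = f^π be its closed perspective transform, and let D = {z ∈ E : κ(z) ≤ 1}. Then: (i) the set {λ ∈ ℝ : ∃ y ∈ X, (y,λ) ∈ D} has a maximum λ' and λ' = 1/(min f); (ii) D ∩ (X × {λ'}) = (1/(min f))·(argmin f × {1}); (iii) every (x,1) ∈ Fix(P_S ∘ T) satisfies ((1+λ')/λ')·x ∈ argmin f; (iv) every y ∈ argmin f satisfies ((λ'/(1+λ'))·y, 1) ∈ Fix(P_S ∘ T). -/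
/-!
Write `m = min f`, so `lam' = 1 / m`. Everything rests on the lower bound `κ (y, lam) ≥ lam * m` for
`lam > 0`, with equality exactly when `y / lam` minimizes `f`; the facts about the set `{κ ≤ 1}`
follow at once from it.

For the fixed points, put `μ₀ = lam' / (1 + lam')` and `r₀ = 1 / (1 + lam') = 1 - μ₀ = μ₀ * m`.
For `z = (x, 1)` the objective is at least `r₀` everywhere: a point of height `μ ≤ μ₀` is at distance
at least `1 - μ₀` from `z`, and one of height `μ > μ₀` has gauge at least `μ * m` (`le_polarObj`).
If `y` minimizes `f`, the point `(μ₀ y, μ₀)` attains this bound for `z = (μ₀ y, 1)`, so it is `T z`.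

Conversely let `T (x, 1) = (x, μ)`, with objective value `r`. If `r > r₀`, move slightly from `(x, μ)`
towards `(μ₀ y, μ₀)`. By convexity the gauge and the vertical distance to `z` both fall at first order
below `r`, while the horizontal distance starts at zero and so enters the norm only at second
order; hence the objective decreases (`exists_step`), which is absurd. So `r = r₀`, which forces
`μ = μ₀` and `f (x / μ₀) = m`.
-/


open scoped ENNReal RealInnerProductSpace Pointwise Topology
open Filter

noncomputable section

variable {X : Type*} [NormedAddCommGroup X] [InnerProductSpace ℝ X] [FiniteDimensional ℝ X]

/-- The point `(x, t)` of the lifted space `E = X ×₂ ℝ` (Euclidean product). -/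
def pt (x : X) (t : ℝ) : WithLp 2 (X × ℝ) := (WithLp.equiv 2 (X × ℝ)).symm (x, t)

/-- First (`X`-) coordinate of a point of the lifted space. -/
def fstE (z : WithLp 2 (X × ℝ)) : X := (WithLp.equiv 2 (X × ℝ) z).1

/-- Second (`ℝ`-) coordinate of a point of the lifted space. -/
def sndE (z : WithLp 2 (X × ℝ)) : ℝ := (WithLp.equiv 2 (X × ℝ) z).2

/-- Orthogonal projection `P_S` onto the affine subspace `S = X × {1}`. -/
def PS (z : WithLp 2 (X × ℝ)) : WithLp 2 (X × ℝ) := pt (fstE z) 1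

/-- A closed gauge: a convex, lower semicontinuous, positively homogeneous
function `κ : E → [0,∞]` on the lifted space. -/
def IsClosedGauge (κ : WithLp 2 (X × ℝ) → ℝ≥0∞) : Prop :=
  LowerSemicontinuous κ ∧
  (∀ z w : WithLp 2 (X × ℝ), ∀ a b : ℝ, 0 ≤ a → 0 ≤ b → a + b = 1 →
    κ (a • z + b • w) ≤ ENNReal.ofReal a * κ z + ENNReal.ofReal b * κ w) ∧
  (∀ t : ℝ, 0 ≤ t → ∀ z, κ (t • z) = ENNReal.ofReal t * κ z)

/-- The objective `u ↦ max {κ(u), ‖z − u‖}` defining the polar proximal map. -/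
def polarObj (κ : WithLp 2 (X × ℝ) → ℝ≥0∞) (z u : WithLp 2 (X × ℝ)) : ℝ≥0∞ :=
  max (κ u) (ENNReal.ofReal ‖z - u‖)

/-- `T` is the polar proximal map of `κ`: for every `z`, `T z` is the unique
minimizer of `u ↦ max {κ(u), ‖z − u‖}`. -/
def IsPolarProx (κ : WithLp 2 (X × ℝ) → ℝ≥0∞)
    (T : WithLp 2 (X × ℝ) → WithLp 2 (X × ℝ)) : Prop :=
  ∀ z, (∀ u, polarObj κ z (T z) ≤ polarObj κ z u) ∧
    (∀ u, (∀ v, polarObj κ z u ≤ polarObj κ z v) → u = T z)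

lemma norm_pt_sub_sq (x y : X) (s t : ℝ) :
    ‖pt x s - pt y t‖ ^ 2 = ‖x - y‖ ^ 2 + (s - t) ^ 2 := by
  rw [WithLp.prod_norm_sq_eq_of_L2]
  simp [pt]

lemma abs_sub_le_norm_pt_sub (x y : X) (s t : ℝ) : |s - t| ≤ ‖pt x s - pt y t‖ := by
  refine abs_le_of_sq_le_sq ?_ (norm_nonneg _)
  rw [norm_pt_sub_sq]
  nlinarith [sq_nonneg ‖x - y‖]

lemma smul_pt (a : ℝ) (x : X) (s : ℝ) : a • pt x s = pt (a • x) (a * s) := rfl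

lemma add_pt (x y : X) (s t : ℝ) : pt x s + pt y t = pt (x + y) (s + t) := rfl

lemma pt_inj {x y : X} {s t : ℝ} (h : pt x s = pt y t) : x = y ∧ s = t :=
  ⟨congrArg fstE h, congrArg sndE h⟩

lemma ofReal_mul_le_gauge {f : X → ℝ≥0∞} {κ : WithLp 2 (X × ℝ) → ℝ≥0∞} {m : ℝ}
    (hm : ∀ x, ENNReal.ofReal m ≤ f x)
    (hκpos : ∀ (x : X) (lam : ℝ), 0 < lam →
      κ (pt x lam) = ENNReal.ofReal lam * f (lam⁻¹ • x))
    (y : X) {lam : ℝ} (hlam : 0 < lam) : ENNReal.ofReal (lam * m) ≤ κ (pt y lam) := by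
  rw [hκpos y lam hlam, ENNReal.ofReal_mul hlam.le]
  gcongr
  exact hm _

/-- The objective at `(x, 1)` is bounded below by the height gap `1 - μ₀`, where `μ₀` is the height
at which the distance bound `1 - μ` and the gauge bound `μ * m` balance. -/
lemma le_polarObj {f : X → ℝ≥0∞} {κ : WithLp 2 (X × ℝ) → ℝ≥0∞} {m μ₀ : ℝ} (hm0 : 0 < m)
    (hμ₀ : 0 < μ₀) (hbal : μ₀ * m = 1 - μ₀)
    (hm : ∀ x, ENNReal.ofReal m ≤ f x)
    (hκpos : ∀ (x : X) (lam : ℝ), 0 < lam →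
      κ (pt x lam) = ENNReal.ofReal lam * f (lam⁻¹ • x))
    (x v : X) (μ : ℝ) : ENNReal.ofReal (1 - μ₀) ≤ polarObj κ (pt x 1) (pt v μ) := by
  rcases le_or_gt μ μ₀ with h | h
  · refine le_max_of_le_right (ENNReal.ofReal_le_ofReal ?_)
    linarith [abs_sub_le_norm_pt_sub x v 1 μ, le_abs_self (1 - μ)]
  · refine le_max_of_le_left (le_trans (ENNReal.ofReal_le_ofReal ?_)
      (ofReal_mul_le_gauge hm hκpos v (hμ₀.trans h)))
    nlinarith

/-- A first-order decrease of rate `r - r₀` beats a second-order increase `t ^ 2 * C`. -/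
lemma exists_step {r r₀ C : ℝ} (h0 : 0 ≤ r₀) (h : r₀ < r) (hC : 0 ≤ C) :
    ∃ t, 0 < t ∧ t ≤ 1 ∧ t ^ 2 * C + ((1 - t) * r + t * r₀) ^ 2 < r ^ 2 := by
  have hd : 0 < r - r₀ := by linarith
  have hr : 0 < r := by linarith
  have hD : 0 < (r - r₀) ^ 2 + C + r ^ 2 := by positivity
  set D := (r - r₀) ^ 2 + C + r ^ 2 with hDdef
  have ht : 0 < r * (r - r₀) / D := by positivity
  have htD : r * (r - r₀) / D * D = r * (r - r₀) := by field_simp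
  refine ⟨r * (r - r₀) / D, ht, ?_, ?_⟩
  · rw [div_le_one hD]
    nlinarith [sq_nonneg (r - r₀)]
  · set t := r * (r - r₀) / D
    have h1 : t ^ 2 * C + ((1 - t) * r + t * r₀) ^ 2
        = r ^ 2 - 2 * t * (r * (r - r₀)) + t * (t * D) - t ^ 2 * r ^ 2 := by
      rw [hDdef]; ring
    rw [h1, mul_comm t D, mul_comm D t, htD]
    have := mul_pos ht (mul_pos hr hd)
    nlinarith [sq_nonneg (t * r)]

/-- If the minimizer of the objective at `(x, 1)` lies vertically above or below `x`, its value is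
at most that of any `r₀` bounding both the gauge and the height gap of some point `(w, 1 - r₀)`. -/
lemma polarObj_le_of_vertical {κ : WithLp 2 (X × ℝ) → ℝ≥0∞} (hκ : IsClosedGauge κ)
    {r₀ μ : ℝ} (h0 : 0 ≤ r₀) {x w : X} (hw : κ (pt w (1 - r₀)) ≤ ENNReal.ofReal r₀)
    (hmin : ∀ v, polarObj κ (pt x 1) (pt x μ) ≤ polarObj κ (pt x 1) v) :
    polarObj κ (pt x 1) (pt x μ) ≤ ENNReal.ofReal r₀ := by
  by_contra! hlt
  have hfin : polarObj κ (pt x 1) (pt x μ) ≠ ⊤ := by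
    refine ne_top_of_le_ne_top ?_ (hmin (pt w (1 - r₀)))
    exact (max_lt (hw.trans_lt ENNReal.ofReal_lt_top) ENNReal.ofReal_lt_top).ne
  obtain ⟨r, hr0, hr⟩ : ∃ r : ℝ, 0 ≤ r ∧ polarObj κ (pt x 1) (pt x μ) = ENNReal.ofReal r :=
    ⟨_, ENNReal.toReal_nonneg, (ENNReal.ofReal_toReal hfin).symm⟩
  rw [hr] at hlt hmin
  have hrr : r₀ < r := (ENNReal.ofReal_lt_ofReal_iff_of_nonneg h0).1 hlt
  have hκu : κ (pt x μ) ≤ ENNReal.ofReal r := hr ▸ le_max_left _ _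
  have hdu : |1 - μ| ≤ r := by
    have h1 : ENNReal.ofReal ‖pt x 1 - pt x μ‖ ≤ ENNReal.ofReal r := hr ▸ le_max_right _ _
    exact (abs_sub_le_norm_pt_sub x x 1 μ).trans ((ENNReal.ofReal_le_ofReal_iff hr0).1 h1)
  obtain ⟨t, ht0, ht1, ht⟩ := exists_step h0 hrr (sq_nonneg ‖x - w‖)
  have ht1' : 0 ≤ 1 - t := by linarith
  refine (hmin ((1 - t) • pt x μ + t • pt w (1 - r₀))).not_gt (max_lt ?_ ?_)
  · refine (hκ.2.1 _ _ (1 - t) t ht1' ht0.le (by ring)).trans_lt ?_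
    calc _ ≤ ENNReal.ofReal (1 - t) * ENNReal.ofReal r
          + ENNReal.ofReal t * ENNReal.ofReal r₀ := by gcongr
      _ = ENNReal.ofReal ((1 - t) * r + t * r₀) := by
          rw [← ENNReal.ofReal_mul ht1', ← ENNReal.ofReal_mul ht0.le,
            ← ENNReal.ofReal_add (by positivity) (by positivity)]
      _ < ENNReal.ofReal r := by
          rw [ENNReal.ofReal_lt_ofReal_iff_of_nonneg (by positivity)]
          nlinarith
  · rw [ENNReal.ofReal_lt_ofReal_iff_of_nonneg (norm_nonneg _)]
    refine lt_of_pow_lt_pow_left₀ 2 hr0 (lt_of_le_of_lt ?_ ht)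
    rw [smul_pt, smul_pt, add_pt, norm_pt_sub_sq]
    have hx : x - ((1 - t) • x + t • w) = t • (x - w) := by module
    rw [hx, norm_smul, mul_pow, Real.norm_eq_abs, sq_abs]
    refine add_le_add_right (sq_le_sq' ?_ ?_) _
    · nlinarith [(abs_le.1 hdu).1]
    · nlinarith [(abs_le.1 hdu).2]

/-- For `f : X → [0,∞]` proper convex lsc with `inf f > 0` and
`argmin f ≠ ∅`, and `κ = f^π` its closed perspective transform (characterized by
`κ(x,λ) = λ f(x/λ)` for `λ > 0` and `κ(x,λ) = ∞` for `λ < 0`, together with `κ`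
being a closed gauge): (i) `{λ : ∃ y, (y,λ) ∈ D}` has maximum `lam' = 1/(min f)`;
(ii) `D ∩ (X × {lam'}) = (1/min f) • (argmin f × {1})`; (iii) every
`(x,1) ∈ Fix (P_S ∘ T)` satisfies `((1+lam')/lam') x ∈ argmin f`; (iv) every
`y ∈ argmin f` satisfies `((lam'/(1+lam')) y, 1) ∈ Fix (P_S ∘ T)`. -/
theorem P4A_fixedPoints_facial_characterization
    (f : X → ℝ≥0∞)
    (hfproper : ∃ x, f x ≠ ⊤)
    (hfconv : ∀ x y : X, ∀ a b : ℝ, 0 ≤ a → 0 ≤ b → a + b = 1 →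
      f (a • x + b • y) ≤ ENNReal.ofReal a * f x + ENNReal.ofReal b * f y)
    (hflsc : LowerSemicontinuous f)
    (hinf : 0 < ⨅ x, f x)
    (hargmin : ∃ x : X, ∀ w, f x ≤ f w)
    (κ : WithLp 2 (X × ℝ) → ℝ≥0∞) (hκ : IsClosedGauge κ)
    (hκpos : ∀ (x : X) (lam : ℝ), 0 < lam →
      κ (pt x lam) = ENNReal.ofReal lam * f (lam⁻¹ • x))
    (hκneg : ∀ (x : X) (lam : ℝ), lam < 0 → κ (pt x lam) = ⊤)
    (T : WithLp 2 (X × ℝ) → WithLp 2 (X × ℝ)) (hT : IsPolarProx κ T)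
    (lam' : ℝ) (hlam' : lam' = 1 / (⨅ x, f x).toReal) :
    IsGreatest {lam : ℝ | ∃ y : X, κ (pt y lam) ≤ 1} lam' ∧
    ({z : WithLp 2 (X × ℝ) | κ z ≤ 1} ∩ {z | sndE z = lam'} =
      (1 / (⨅ x, f x).toReal) • ((fun y : X => pt y 1) '' {y : X | ∀ w, f y ≤ f w})) ∧
    (∀ x : X, PS (T (pt x 1)) = pt x 1 →
      ((1 + lam') / lam') • x ∈ {y : X | ∀ w, f y ≤ f w}) ∧
    (∀ y : X, (∀ w, f y ≤ f w) →
      PS (T (pt ((lam' / (1 + lam')) • y) 1)) = pt ((lam' / (1 + lam')) • y) 1) := by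
  obtain ⟨y₀, hy₀⟩ := hargmin
  have hIeq : ∀ y, (∀ w, f y ≤ f w) → f y = ⨅ x, f x := fun y hy =>
    le_antisymm (le_iInf hy) (iInf_le _ _)
  have hI : (⨅ x, f x) ≠ ⊤ := by
    obtain ⟨x, hx⟩ := hfproper
    exact ne_top_of_le_ne_top hx (iInf_le _ _)
  set m := (⨅ x, f x).toReal with hmdef
  have hmI : ENNReal.ofReal m = ⨅ x, f x := ENNReal.ofReal_toReal hI
  have hm0 : 0 < m := ENNReal.toReal_pos hinf.ne' hI
  have hm : ∀ x, ENNReal.ofReal m ≤ f x := fun x => hmI ▸ iInf_le _ _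
  have hfm : ∀ y, (∀ w, f y ≤ f w) → f y = ENNReal.ofReal m := fun y hy =>
    (hIeq y hy).trans hmI.symm
  have hl0 : 0 < lam' := by rw [hlam']; positivity
  have hlm : lam' * m = 1 := by rw [hlam']; field_simp
  have hlow := fun (y : X) (lam : ℝ) (h : 0 < lam) => ofReal_mul_le_gauge hm hκpos y h
  -- The gauge bound is attained above minimizers of `f` ...
  have hatt : ∀ y, (∀ w, f y ≤ f w) → ∀ lam : ℝ, 0 < lam →
      κ (pt (lam • y) lam) = ENNReal.ofReal (lam * m) := by
    intro y hy lam h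
    rw [hκpos _ _ h, inv_smul_smul₀ h.ne', hfm y hy, ENNReal.ofReal_mul h.le]
  -- ... and only there.
  have hconv : ∀ (x : X) (lam : ℝ), 0 < lam → κ (pt x lam) ≤ ENNReal.ofReal (lam * m) →
      ∀ w, f (lam⁻¹ • x) ≤ f w := by
    intro x lam h hle w
    rw [hκpos _ _ h, ENNReal.ofReal_mul h.le, ENNReal.mul_le_mul_iff_right
      (ENNReal.ofReal_pos.2 h).ne' ENNReal.ofReal_ne_top] at hle
    exact hle.trans (hm w)
  set μ₀ := lam' / (1 + lam') with hμdef
  have hμ₀ : 0 < μ₀ := by positivity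
  have hbal : μ₀ * m = 1 - μ₀ := by
    rw [hμdef]; field_simp; linarith
  have hr₀ : 0 ≤ 1 - μ₀ := by rw [← hbal]; positivity
  refine ⟨⟨⟨lam' • y₀, ?_⟩, ?_⟩, ?_, ?_, ?_⟩
  · rw [hatt y₀ hy₀ _ hl0, hlm, ENNReal.ofReal_one]
  · rintro lam ⟨y, hy⟩
    rcases le_or_gt lam 0 with h | h
    · exact h.trans hl0.le
    · have h1 := (hlow y lam h).trans hy
      rw [ENNReal.ofReal_le_one] at h1
      exact le_of_mul_le_mul_right (h1.trans hlm.ge) hm0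
  · rw [← hlam']
    ext z
    simp only [Set.mem_inter_iff, Set.mem_ofPred_eq, Set.mem_smul_set, Set.exists_mem_image]
    constructor
    · rintro ⟨hz, hs⟩
      have hzp : z = pt (fstE z) lam' := by rw [← hs]; rfl
      refine ⟨lam'⁻¹ • fstE z, hconv _ _ hl0 ?_, ?_⟩
      · rw [← hzp, hlm, ENNReal.ofReal_one]; exact hz
      · rw [smul_pt, smul_inv_smul₀ hl0.ne', mul_one, ← hzp]
    · rintro ⟨y, hy, rfl⟩
      rw [smul_pt, mul_one]
      refine ⟨?_, rfl⟩
      rw [hatt y hy _ hl0, hlm, ENNReal.ofReal_one]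
  · intro x hx
    obtain ⟨μ, hμ⟩ : ∃ μ, T (pt x 1) = pt x μ :=
      ⟨sndE (T (pt x 1)), by
        have h1 : fstE (T (pt x 1)) = x := (pt_inj hx).1
        calc T (pt x 1) = pt (fstE (T (pt x 1))) (sndE (T (pt x 1))) := rfl
          _ = _ := by rw [h1]⟩
    have hmin := (hT (pt x 1)).1
    rw [hμ] at hmin
    have hval : polarObj κ (pt x 1) (pt x μ) ≤ ENNReal.ofReal (1 - μ₀) := by
      refine polarObj_le_of_vertical hκ hr₀ (w := μ₀ • y₀) ?_ hmin
      rw [sub_sub_cancel, hatt y₀ hy₀ _ hμ₀, hbal]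
    have hκv := (le_max_left _ _).trans hval
    have hdv := (le_max_right _ _).trans hval
    rw [ENNReal.ofReal_le_ofReal_iff hr₀] at hdv
    have hge : μ₀ ≤ μ := by
      linarith [abs_sub_le_norm_pt_sub x x 1 μ, le_abs_self (1 - μ)]
    have hle : μ ≤ μ₀ := by
      have h1 := (hlow x μ (hμ₀.trans_le hge)).trans hκv
      rw [ENNReal.ofReal_le_ofReal_iff hr₀, ← hbal] at h1
      exact le_of_mul_le_mul_right h1 hm0
    have hμeq : μ = μ₀ := le_antisymm hle hge
    have hinv : (1 + lam') / lam' = μ₀⁻¹ := by rw [hμdef, inv_div]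
    rw [hinv]
    rw [hμeq, ← hbal] at hκv
    exact hconv x μ₀ hμ₀ hκv
  · intro y hy
    have hopt : ∀ v, polarObj κ (pt (μ₀ • y) 1) (pt (μ₀ • y) μ₀)
        ≤ polarObj κ (pt (μ₀ • y) 1) v := by
      intro v
      refine le_trans (max_le ?_ ?_)
        (le_polarObj hm0 hμ₀ hbal hm hκpos (μ₀ • y) (fstE v) (sndE v))
      · rw [hatt y hy _ hμ₀, hbal]
      · refine ENNReal.ofReal_le_ofReal ((sq_le_sq₀ (norm_nonneg _) hr₀).1 ?_)
        rw [norm_pt_sub_sq]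
        simp
    rw [← (hT _).2 _ hopt]
    rfl
end
end

section
/- Let f : X → [0,∞] be proper, convex, and lower semicontinuous with η := inf f > 0 and argmin f ≠ ∅, and let κ = f^π be its closed perspective transform. Let γ ∈ [0,1), y₀ ∈ X, and define the sequence (y_n) in X by (y_{n+1},1) = (1−γ)·P_S(T(y_n,1)) + γ·(y_n,1), and let λ_{n+1} ∈ ℝ denote the second coordinate of T(y_n,1). Then: (a) (y_n) converges to some y ∈ X with (y,1) ∈ Fix(P_S ∘ T); (b) λ_n → 1/(1+η); (c) (1/λ_n)·y_n → (1+η)·y and (1+η)·y ∈ argmin f. -/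
/-!
Write `a = 1 / (1 + η)`. For `z = (y, 1)` and `T z = (x, l)` the value `ρ = ‖z - T z‖` dominates
`κ (T z)`, and `T z` is the projection of `z` onto the sublevel set `{κ ≤ ρ}` (`kappa_T_le`,
`inner_T_nonpos`). If `x⋆` minimizes `f` and `p = a x⋆`, then `(p, a)` lies in that sublevel set,
because `κ (p, a) = η a` and `ρ ≥ max (η l) (1 - l) ≥ η a`; the variational inequality then reads
`⟪y - x, p - x⟫ ≤ (1 - l) (l - a)`. Combined with `η² l² ≤ ρ² = ‖y - x‖² + (1 - l)²` this yields
`2 ⟪y - x, p - x⟫ ≤ a ‖y - x‖²` (`scalar_bound`), so the map `y ↦ x` and its relaxations are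
strongly quasi-nonexpansive with respect to every such `p` (`relaxed_step`).

Hence `y n` is Fejér monotone with respect to the rescaled minimizers and `y n - x n → 0`. The
graph of `T` is closed (`T_closed`), so a cluster point `p` of `y n` gives a fixed point `(p, 1)` of
`P_S ∘ T`; fixed points are rescaled minimizers (`min_of_fixed`), and Fejér monotonicity upgrades
this to convergence of the whole sequence. Finally `η a ≤ ρ ≤ √(‖y - p‖² + (η a)²)` forces
`ρ → η a`, and then `l → a` since `ρ² = ‖y - x‖² + (1 - l)²` and `η l ≤ ρ`.
-/


open scoped ENNReal RealInnerProductSpace Pointwise Topology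
open Filter

noncomputable section

variable {X : Type*} [NormedAddCommGroup X] [InnerProductSpace ℝ X] [FiniteDimensional ℝ X]

section Helpers

set_option linter.unusedSectionVars false

/-! ### Coordinates in the lifted space -/

lemma pt_fst_snd (u : WithLp 2 (X × ℝ)) : pt (fstE u) (sndE u) = u := rfl

@[simp] lemma fstE_pt (x : X) (t : ℝ) : fstE (pt x t) = x := rfl

@[simp] lemma sndE_pt (x : X) (t : ℝ) : sndE (pt x t) = t := rfl

@[simp] lemma fstE_add (u v : WithLp 2 (X × ℝ)) : fstE (u + v) = fstE u + fstE v := rfl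

@[simp] lemma fstE_smul (c : ℝ) (v : WithLp 2 (X × ℝ)) : fstE (c • v) = c • fstE v := rfl

lemma norm_sub_sq_pt (u v : WithLp 2 (X × ℝ)) :
    ‖u - v‖ ^ 2 = ‖fstE u - fstE v‖ ^ 2 + (sndE u - sndE v) ^ 2 := by
  rw [WithLp.prod_norm_sq_eq_of_L2, ← sq_abs (sndE u - sndE v)]
  rfl

lemma inner_sub_pt (z u v : WithLp 2 (X × ℝ)) :
    ⟪z - u, v - u⟫ = ⟪fstE z - fstE u, fstE v - fstE u⟫
      + (sndE z - sndE u) * (sndE v - sndE u) := by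
  rw [WithLp.prod_inner_apply]
  simp only [fstE, sndE]
  congr 1
  exact mul_comm _ _

lemma continuous_fstE : Continuous (fstE : WithLp 2 (X × ℝ) → X) :=
  continuous_fst.comp (WithLp.prod_continuous_ofLp 2 X ℝ)

lemma continuous_sndE : Continuous (sndE : WithLp 2 (X × ℝ) → ℝ) :=
  continuous_snd.comp (WithLp.prod_continuous_ofLp 2 X ℝ)

lemma continuous_pt_one : Continuous (fun x : X => pt x 1) :=
  (WithLp.prod_continuous_toLp 2 X ℝ).comp (by fun_prop)

/-! ### The polar proximal map as a projection onto a sublevel set -/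

variable {κ : WithLp 2 (X × ℝ) → ℝ≥0∞} {T : WithLp 2 (X × ℝ) → WithLp 2 (X × ℝ)}

/-- At the polar proximal point the distance term dominates: otherwise shrinking `T z` towards the
origin would lower the objective. -/
lemma kappa_T_le (hκ : IsClosedGauge κ) (hT : IsPolarProx κ T) (hfin : ∃ w, κ w ≠ ⊤)
    (z : WithLp 2 (X × ℝ)) : κ (T z) ≤ ENNReal.ofReal ‖z - T z‖ := by
  by_contra! h
  obtain ⟨w, hw⟩ := hfin
  have htop : κ (T z) ≠ ⊤ := by
    have h1 : κ (T z) ≤ polarObj κ z w := (le_max_left _ _).trans ((hT z).1 w)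
    exact ne_top_of_le_ne_top (max_lt hw.lt_top ENNReal.ofReal_lt_top).ne h1
  have h0 : κ (T z) ≠ 0 := (pos_of_gt h).ne'
  have hlt : ‖z - T z‖ < (κ (T z)).toReal :=
    (ENNReal.ofReal_lt_iff_lt_toReal (norm_nonneg _) htop).1 h
  have hev : ∀ᶠ τ : ℝ in 𝓝[<] 1, ‖z - τ • T z‖ < (κ (T z)).toReal := by
    have hc : Continuous (fun τ : ℝ => ‖z - τ • T z‖) := by fun_prop
    have : ∀ᶠ τ : ℝ in 𝓝 1, ‖z - τ • T z‖ < (κ (T z)).toReal :=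
      hc.continuousAt.eventually_lt continuousAt_const (by simpa using hlt)
    exact this.filter_mono nhdsWithin_le_nhds
  obtain ⟨τ, hτ, hτ0, hτ1⟩ := (hev.and (Ioo_mem_nhdsLT (zero_lt_one' ℝ))).exists
  have h2 : κ (τ • T z) < κ (T z) := by
    rw [hκ.2.2 τ hτ0.le]
    calc ENNReal.ofReal τ * κ (T z) < 1 * κ (T z) := by
          apply ENNReal.mul_lt_mul_left h0 htop
          simpa using hτ1
      _ = κ (T z) := one_mul _
  have h3 : polarObj κ z (τ • T z) < κ (T z) :=
    max_lt h2 ((ENNReal.ofReal_lt_iff_lt_toReal (norm_nonneg _) htop).2 hτ)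
  exact absurd ((le_max_left _ _).trans ((hT z).1 (τ • T z))) (not_le.2 h3)

/-- No point of the sublevel set `{κ ≤ ‖z - T z‖}` is closer to `z` than `T z`: such a point would
be a second minimizer. -/
lemma norm_sub_T_le (hT : IsPolarProx κ T) (z v : WithLp 2 (X × ℝ)) (hv : κ v ≤ ENNReal.ofReal ‖z - T z‖) :
    ‖z - T z‖ ≤ ‖z - v‖ := by
  by_contra! h
  have hle : polarObj κ z v ≤ polarObj κ z (T z) :=
    (max_le hv (ENNReal.ofReal_le_ofReal h.le)).trans (le_max_right _ _)
  have : v = T z := (hT z).2 v fun w => hle.trans ((hT z).1 w)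
  rw [this] at h
  exact lt_irrefl _ h

/-- The variational inequality for the projection of `z` onto `{κ ≤ ‖z - T z‖}`. -/
lemma inner_T_nonpos (hκ : IsClosedGauge κ) (hT : IsPolarProx κ T)
    (z v : WithLp 2 (X × ℝ)) (hv : κ v ≤ ENNReal.ofReal ‖z - T z‖) :
    ⟪z - T z, v - T z⟫ ≤ 0 := by
  have hfin : ∃ w, κ w ≠ ⊤ := ⟨v, ne_top_of_le_ne_top ENNReal.ofReal_ne_top hv⟩
  have hu := kappa_T_le hκ hT hfin z
  have hconv : Convex ℝ {w | κ w ≤ ENNReal.ofReal ‖z - T z‖} := by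
    intro p hp q hq a b ha hb hab
    refine (hκ.2.1 p q a b ha hb hab).trans ?_
    calc _ ≤ ENNReal.ofReal a * ENNReal.ofReal ‖z - T z‖
          + ENNReal.ofReal b * ENNReal.ofReal ‖z - T z‖ := by
          gcongr
          · exact hp
          · exact hq
      _ = _ := by
          rw [← add_mul, ← ENNReal.ofReal_add ha hb, hab, ENNReal.ofReal_one, one_mul]
  refine (norm_eq_iInf_iff_real_inner_le_zero hconv hu).1 ?_ v hv
  have : Nonempty {w | κ w ≤ ENNReal.ofReal ‖z - T z‖} := ⟨⟨_, hu⟩⟩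
  apply le_antisymm
  · exact le_ciInf fun w => norm_sub_T_le hT z w w.2
  · exact ciInf_le ⟨0, by rintro _ ⟨w, rfl⟩; exact norm_nonneg _⟩
      (⟨T z, hu⟩ : {w | κ w ≤ ENNReal.ofReal ‖z - T z‖})

/-! ### Estimates for the closed perspective transform -/

variable {f : X → ℝ≥0∞} {η : ℝ}

lemma le_kappa (hη : (⨅ x, f x) = ENNReal.ofReal η)
    (hκpos : ∀ (x : X) (lam : ℝ), 0 < lam →
      κ (pt x lam) = ENNReal.ofReal lam * f (lam⁻¹ • x))
    (hηpos : 0 < η) (u : WithLp 2 (X × ℝ)) : ENNReal.ofReal (η * sndE u) ≤ κ u := by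
  rcases le_or_gt (sndE u) 0 with h | h
  · rw [ENNReal.ofReal_of_nonpos (mul_nonpos_of_nonneg_of_nonpos hηpos.le h)]
    exact zero_le
  · rw [← pt_fst_snd u, hκpos _ _ h, mul_comm, sndE_pt, ENNReal.ofReal_mul h.le, ← hη]
    gcongr
    exact iInf_le _ _

lemma kappa_min
    (hκpos : ∀ (x : X) (lam : ℝ), 0 < lam →
      κ (pt x lam) = ENNReal.ofReal lam * f (lam⁻¹ • x))
    (hηpos : 0 < η) (p : X) (hp : f ((1 + η) • p) = ENNReal.ofReal η) :
    κ (pt p (1 + η)⁻¹) = ENNReal.ofReal (η * (1 + η)⁻¹) := by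
  have : 0 < (1 + η)⁻¹ := by positivity
  rw [hκpos _ _ this, inv_inv, hp, mul_comm η, ENNReal.ofReal_mul this.le]

/-- The estimates satisfied by `(x, l) = T (y, 1)`, with `ρ = ‖(y, 1) - T (y, 1)‖` and any `p` such
that `(1 + η) • p` minimizes `f`. The fourth is the variational inequality tested at
`(p, 1 / (1 + η))`; the last one compares the optimal value with the objective at that point. -/
lemma T_estimates (hκ : IsClosedGauge κ) (hT : IsPolarProx κ T)
    (hη : (⨅ x, f x) = ENNReal.ofReal η)
    (hκpos : ∀ (x : X) (lam : ℝ), 0 < lam →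
      κ (pt x lam) = ENNReal.ofReal lam * f (lam⁻¹ • x))
    (hηpos : 0 < η) (p : X) (hp : f ((1 + η) • p) = ENNReal.ofReal η) (y x : X) (l ρ : ℝ)
    (hx : x = fstE (T (pt y 1))) (hl : l = sndE (T (pt y 1)))
    (hρ : ρ = ‖pt y 1 - T (pt y 1)‖) :
    ρ ^ 2 = ‖y - x‖ ^ 2 + (1 - l) ^ 2 ∧ η * l ≤ ρ ∧ η * (1 + η)⁻¹ ≤ ρ ∧
      ⟪y - x, p - x⟫ + (1 - l) * ((1 + η)⁻¹ - l) ≤ 0 ∧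
      ρ ^ 2 ≤ ‖y - p‖ ^ 2 + (η * (1 + η)⁻¹) ^ 2 := by
  have hkp := kappa_min hκpos hηpos p hp
  have hfin : ∃ w, κ w ≠ ⊤ := ⟨_, by rw [hkp]; exact ENNReal.ofReal_ne_top⟩
  have hρ0 : 0 ≤ ρ := hρ ▸ norm_nonneg _
  have h1 : ρ ^ 2 = ‖y - x‖ ^ 2 + (1 - l) ^ 2 := by
    rw [hρ, norm_sub_sq_pt, hx, hl]; rfl
  have h2 : η * l ≤ ρ := by
    have := (le_kappa hη hκpos hηpos _).trans (kappa_T_le hκ hT hfin (pt y 1))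
    rw [← hl, ← hρ] at this
    exact (ENNReal.ofReal_le_ofReal_iff hρ0).1 this
  have h1' : 1 - l ≤ ρ := by
    apply le_of_sq_le_sq _ hρ0
    nlinarith [sq_nonneg ‖y - x‖]
  have h3 : η * (1 + η)⁻¹ ≤ ρ := by
    rw [← div_eq_mul_inv, div_le_iff₀ (by positivity)]
    nlinarith
  have h4 := inner_T_nonpos hκ hT (pt y 1) (pt p (1 + η)⁻¹)
    (by rw [hkp, ← hρ]; exact ENNReal.ofReal_le_ofReal h3)
  rw [inner_sub_pt, ← hx, ← hl] at h4
  refine ⟨h1, h2, h3, h4, ?_⟩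
  have h5 := norm_sub_T_le hT (pt y 1) (pt p (1 + η)⁻¹)
    (by rw [hkp, ← hρ]; exact ENNReal.ofReal_le_ofReal h3)
  rw [← hρ] at h5
  have h6 : ρ ^ 2 ≤ ‖pt y 1 - pt p (1 + η)⁻¹‖ ^ 2 := by gcongr
  rw [norm_sub_sq_pt] at h6
  have : 1 - (1 + η)⁻¹ = η * (1 + η)⁻¹ := by field_simp; ring
  simpa [this] using h6

/-- The scalar inequality behind the quasi-nonexpansiveness of `y ↦ fstE (T (y, 1))`. For
`1 / (1 + η) < l < 1` it follows from
`η² l² - (1 - l)² = (1 + η) (l - 1 / (1 + η)) (η l + 1 - l)` and `1 - l ≤ η l`;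
for other `l` the left side is nonpositive. -/
lemma scalar_bound {l ρ d : ℝ} (hηpos : 0 < η) (h1 : ρ ^ 2 = d ^ 2 + (1 - l) ^ 2)
    (h2 : η * l ≤ ρ) :
    2 * ((1 - l) * (l - (1 + η)⁻¹)) ≤ (1 + η)⁻¹ * d ^ 2 := by
  have ha : 0 < (1 + η)⁻¹ := by positivity
  have haη : (1 + η) * (1 + η)⁻¹ = 1 := mul_inv_cancel₀ (by positivity)
  set a := (1 + η)⁻¹
  have ha1 : a < 1 := by nlinarith
  have hd : 0 ≤ a * d ^ 2 := by positivity
  rcases le_or_gt l a with h | h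
  · nlinarith [mul_nonneg (sub_nonneg.2 (h.trans ha1.le)) (sub_nonneg.2 h)]
  rcases le_or_gt 1 l with h' | h'
  · nlinarith [mul_nonneg (sub_nonneg.2 h') (sub_nonneg.2 h.le)]
  have hl : 0 < l := ha.trans h
  have h3 : (η * l) ^ 2 ≤ ρ ^ 2 := by gcongr
  have h4 : 1 - l ≤ η * l := by nlinarith
  have h5 : (l - a) * (η * l + 1 - l) ≤ a * d ^ 2 := by
    have e : (l - a) * (η * l + 1 - l) = a * ((η * l) ^ 2 - (1 - l) ^ 2) := by
      linear_combination (-(l * (η * l + 1 - l))) * haη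
    rw [e]
    exact mul_le_mul_of_nonneg_left (by linarith) ha.le
  nlinarith [mul_nonneg (sub_nonneg.2 h.le) (sub_nonneg.2 h4)]

/-- One relaxed step is strongly quasi-nonexpansive with respect to rescaled minimizers. -/
lemma relaxed_step {γ a : ℝ} (hγ0 : 0 ≤ γ) (hγ1 : γ < 1) {y x p : X}
    (h : 2 * ⟪y - x, p - x⟫ ≤ a * ‖y - x‖ ^ 2) :
    ‖(1 - γ) • x + γ • y - p‖ ^ 2 ≤ ‖y - p‖ ^ 2 - (1 - γ) * (1 - a) * ‖y - x‖ ^ 2 := by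
  have e1 : (1 - γ) • x + γ • y - p = (x - p) + γ • (y - x) := by module
  have e2 : y - p = (x - p) + (y - x) := by abel
  have e3 : p - x = -(x - p) := by abel
  rw [e3, inner_neg_right, real_inner_comm] at h
  rw [e1, e2, norm_add_sq_real, norm_add_sq_real, norm_smul, inner_smul_right, mul_pow,
    Real.norm_eq_abs, sq_abs]
  have : 0 ≤ γ * (1 - γ) * ‖y - x‖ ^ 2 := by
    have : 0 ≤ 1 - γ := by linarith
    positivity
  nlinarith [mul_le_mul_of_nonneg_left h (sub_nonneg.2 hγ1.le)]

/-! ### Fixed points and closedness of the graph -/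

/-- A fixed point `(p, 1)` of `P_S ∘ T` is a minimizer of `f` rescaled by `1 / (1 + η)`. -/
lemma min_of_fixed (hκ : IsClosedGauge κ) (hT : IsPolarProx κ T)
    (hη : (⨅ x, f x) = ENNReal.ofReal η)
    (hκpos : ∀ (x : X) (lam : ℝ), 0 < lam →
      κ (pt x lam) = ENNReal.ofReal lam * f (lam⁻¹ • x))
    (hηpos : 0 < η) (q : X) (hq : f ((1 + η) • q) = ENNReal.ofReal η)
    (p : X) (hp : fstE (T (pt p 1)) = p) : f ((1 + η) • p) = ENNReal.ofReal η := by
  obtain ⟨h1, h2, h3, h4, -⟩ := T_estimates hκ hT hη hκpos hηpos q hq p _ _ _ rfl rfl rfl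
  have ha : 0 < (1 + η)⁻¹ := by positivity
  have haη : (1 + η) * (1 + η)⁻¹ = 1 := mul_inv_cancel₀ (by positivity)
  have hfin : ∃ w, κ w ≠ ⊤ :=
    ⟨_, by rw [kappa_min hκpos hηpos q hq]; exact ENNReal.ofReal_ne_top⟩
  have hk := kappa_T_le hκ hT hfin (pt p 1)
  rw [hp] at h1 h4
  have hT' : T (pt p 1) = pt p (sndE (T (pt p 1))) := by
    conv_lhs => rw [← pt_fst_snd (T (pt p 1)), hp]
  set l := sndE (T (pt p 1))
  set ρ := ‖pt p 1 - T (pt p 1)‖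
  set a := (1 + η)⁻¹
  simp only [sub_self, inner_zero_left, norm_zero] at h1 h4
  have hρ : 0 < ρ := lt_of_lt_of_le (by positivity) h3
  have ha1 : a < 1 := by nlinarith
  have hl1 : l < 1 := by
    by_contra! hc
    rcases hc.eq_or_lt with hc | hc
    · rw [← hc] at h1; nlinarith
    · nlinarith [mul_pos (sub_pos.2 hc) (sub_pos.2 (ha1.trans hc))]
  have hρl : ρ = 1 - l := by
    have : ρ ^ 2 = (1 - l) ^ 2 := by linarith
    exact (sq_eq_sq₀ hρ.le (by linarith)).1 this
  have hla : l = a := by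
    apply le_antisymm
    · nlinarith
    · by_contra! hc
      nlinarith [mul_pos (sub_pos.2 hl1) (sub_pos.2 hc)]
  have hρa : ρ = a * η := by rw [hρl, hla]; linarith
  rw [hT', hla, hκpos _ _ ha, inv_inv, hρa, ENNReal.ofReal_mul ha.le] at hk
  have hk' := (ENNReal.mul_le_mul_iff_right (ENNReal.ofReal_pos.2 ha).ne'
    ENNReal.ofReal_ne_top).1 hk
  exact le_antisymm hk' (hη ▸ iInf_le _ _)

/-- The graph of the polar proximal map is closed along sequences. -/
lemma T_closed (hκ : IsClosedGauge κ) (hT : IsPolarProx κ T) (hfin : ∃ w, κ w ≠ ⊤)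
    {z : ℕ → WithLp 2 (X × ℝ)} {z' u' : WithLp 2 (X × ℝ)}
    (hz : Tendsto z atTop (𝓝 z')) (hu : Tendsto (fun n => T (z n)) atTop (𝓝 u')) :
    u' = T z' := by
  have hρ : Tendsto (fun n => ENNReal.ofReal ‖z n - T (z n)‖) atTop
      (𝓝 (ENNReal.ofReal ‖z' - u'‖)) := ENNReal.tendsto_ofReal (hz.sub hu).norm
  have hk : κ u' ≤ ENNReal.ofReal ‖z' - u'‖ := by
    by_contra! h
    obtain ⟨d, hd1, hd2⟩ := exists_between h
    obtain ⟨n, hn1, hn2⟩ := ((hu.eventually (hκ.1 u' d hd2)).and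
      (hρ.eventually (gt_mem_nhds hd1))).exists
    exact absurd (kappa_T_le hκ hT hfin (z n)) (not_le.2 (hn2.trans hn1))
  refine (hT z').2 u' fun v => ?_
  have hle : polarObj κ z' u' ≤ ENNReal.ofReal ‖z' - u'‖ := max_le hk le_rfl
  refine hle.trans ?_
  refine le_of_tendsto_of_tendsto' hρ
    (tendsto_const_nhds.max (ENNReal.tendsto_ofReal (hz.sub_const v).norm)) fun n => ?_
  exact (le_max_right _ _).trans ((hT (z n)).1 v)

end Helpers

/-! ### Convergence of the iteration -/

/-- For `f` proper convex lsc with `η := inf f > 0` and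
`argmin f ≠ ∅`, `κ = f^π`, `γ ∈ [0,1)`: the `P⁴A` iteration
`(y_{n+1},1) = (1−γ) P_S(T(y_n,1)) + γ (y_n,1)` with shadow coordinates
`λ_{n+1} = (T(y_n,1))₂` satisfies: (a) `y_n → y` with `(y,1) ∈ Fix (P_S ∘ T)`;
(b) `λ_n → 1/(1+η)`; (c) `(1/λ_n) y_n → (1+η) y ∈ argmin f`. -/
theorem P4A_global_convergence_posInf
    (f : X → ℝ≥0∞)
    (hfproper : ∃ x, f x ≠ ⊤)
    (hfconv : ∀ x y : X, ∀ a b : ℝ, 0 ≤ a → 0 ≤ b → a + b = 1 →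
      f (a • x + b • y) ≤ ENNReal.ofReal a * f x + ENNReal.ofReal b * f y)
    (hflsc : LowerSemicontinuous f)
    (η : ℝ) (hη : (⨅ x, f x) = ENNReal.ofReal η) (hηpos : 0 < η)
    (hargmin : ∃ x : X, ∀ w, f x ≤ f w)
    (κ : WithLp 2 (X × ℝ) → ℝ≥0∞) (hκ : IsClosedGauge κ)
    (hκpos : ∀ (x : X) (lam : ℝ), 0 < lam →
      κ (pt x lam) = ENNReal.ofReal lam * f (lam⁻¹ • x))
    (hκneg : ∀ (x : X) (lam : ℝ), lam < 0 → κ (pt x lam) = ⊤)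
    (T : WithLp 2 (X × ℝ) → WithLp 2 (X × ℝ)) (hT : IsPolarProx κ T)
    (γ : ℝ) (hγ0 : 0 ≤ γ) (hγ1 : γ < 1)
    (y : ℕ → X)
    (hrec : ∀ n, pt (y (n + 1)) 1 = (1 - γ) • PS (T (pt (y n) 1)) + γ • pt (y n) 1)
    (lam : ℕ → ℝ) (hlam : ∀ n, lam (n + 1) = sndE (T (pt (y n) 1))) :
    ∃ ylim : X,
      Tendsto y atTop (𝓝 ylim) ∧
      PS (T (pt ylim 1)) = pt ylim 1 ∧
      Tendsto lam atTop (𝓝 (1 / (1 + η))) ∧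
      Tendsto (fun n => (lam n)⁻¹ • y n) atTop (𝓝 ((1 + η) • ylim)) ∧
      (∀ w, f ((1 + η) • ylim) ≤ f w) := by
  obtain ⟨xs, hxs⟩ := hargmin
  have hmin : f xs = ENNReal.ofReal η := hη ▸ le_antisymm (le_iInf hxs) (iInf_le _ _)
  have hη1 : (1 + η) ≠ 0 := by positivity
  set a := (1 + η)⁻¹ with ha_def
  have ha : 0 < a := by positivity
  have haη : (1 + η) * a = 1 := mul_inv_cancel₀ hη1
  have ha1 : a < 1 := by nlinarith
  have hq : f ((1 + η) • (a • xs)) = ENNReal.ofReal η := by rw [smul_smul, haη, one_smul, hmin]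
  have hfin : ∃ w, κ w ≠ ⊤ :=
    ⟨_, by rw [kappa_min hκpos hηpos _ hq]; exact ENNReal.ofReal_ne_top⟩
  let x : ℕ → X := fun n => fstE (T (pt (y n) 1))
  have hy : ∀ n, y (n + 1) = (1 - γ) • x n + γ • y n := fun n => congrArg fstE (hrec n)
  set c := (1 - γ) * (1 - a) with hc_def
  have hc : 0 < c := mul_pos (by linarith) (by linarith)
  have hest := fun (p : X) (hp : f ((1 + η) • p) = ENNReal.ofReal η) (n : ℕ) =>
    T_estimates hκ hT hη hκpos hηpos p hp (y n) (x n) _ _ rfl (hlam n) rfl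
  have hstep : ∀ p, f ((1 + η) • p) = ENNReal.ofReal η → ∀ n,
      ‖y (n + 1) - p‖ ^ 2 ≤ ‖y n - p‖ ^ 2 - c * ‖y n - x n‖ ^ 2 := by
    intro p hp n
    obtain ⟨h1, h2, -, h4, -⟩ := hest p hp n
    rw [hy]
    refine relaxed_step hγ0 hγ1 ?_
    have := scalar_bound hηpos h1 h2
    linarith
  have hanti : ∀ p, f ((1 + η) • p) = ENNReal.ofReal η → Antitone fun n => ‖y n - p‖ ^ 2 := by
    intro p hp
    refine antitone_nat_of_succ_le fun n => (hstep p hp n).trans ?_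
    have : 0 ≤ c * ‖y n - x n‖ ^ 2 := by positivity
    linarith
  have hlim : ∀ p, f ((1 + η) • p) = ENNReal.ofReal η →
      ∃ L, Tendsto (fun n => ‖y n - p‖ ^ 2) atTop (𝓝 L) := fun p hp =>
    ⟨_, tendsto_atTop_ciInf (hanti p hp) ⟨0, by rintro _ ⟨n, rfl⟩; positivity⟩⟩
  have hyx2 : Tendsto (fun n => ‖y n - x n‖ ^ 2) atTop (𝓝 0) := by
    obtain ⟨L, hL⟩ := hlim _ hq
    have hd : Tendsto (fun n => (‖y n - a • xs‖ ^ 2 - ‖y (n + 1) - a • xs‖ ^ 2) / c)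
        atTop (𝓝 0) := by
      simpa using (hL.sub ((tendsto_add_atTop_iff_nat 1).2 hL)).div_const c
    refine squeeze_zero (fun n => by positivity) (fun n => ?_) hd
    rw [le_div_iff₀ hc]
    linarith [hstep _ hq n]
  have hyx : Tendsto (fun n => y n - x n) atTop (𝓝 0) := by
    rw [tendsto_zero_iff_norm_tendsto_zero]
    simpa using hyx2.sqrt
  -- The points `T (y n, 1)` stay in a ball around the rescaled minimizer.
  have hbdd : ∃ R, ∀ n, T (pt (y n) 1) ∈ Metric.closedBall (pt (a • xs) 1) R := by
    have hpt : ∀ n, ‖pt (y n) 1 - pt (a • xs) 1‖ ≤ ‖y 0 - a • xs‖ := by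
      intro n
      apply le_of_sq_le_sq _ (norm_nonneg _)
      rw [norm_sub_sq_pt]
      simpa using hanti _ hq (Nat.zero_le n)
    refine ⟨(‖y 0 - a • xs‖ + 1) + ‖y 0 - a • xs‖, fun n => ?_⟩
    rw [Metric.mem_closedBall, dist_eq_norm]
    obtain ⟨-, -, -, -, h5⟩ := hest _ hq n
    have h6 := hanti _ hq (Nat.zero_le n)
    have h7 : ‖pt (y n) 1 - T (pt (y n) 1)‖ ≤ ‖y 0 - a • xs‖ + 1 := by
      apply le_of_sq_le_sq _ (by positivity)
      have : (η * a) ^ 2 ≤ 1 := by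
        have h8 : η * a ≤ 1 := by linarith
        have h9 : 0 ≤ η * a := by positivity
        nlinarith
      have := norm_nonneg (y 0 - a • xs)
      simp only at h6
      nlinarith
    calc ‖T (pt (y n) 1) - pt (a • xs) 1‖
        ≤ ‖T (pt (y n) 1) - pt (y n) 1‖ + ‖pt (y n) 1 - pt (a • xs) 1‖ :=
          norm_sub_le_norm_sub_add_norm_sub _ _ _
      _ ≤ _ := by
          rw [norm_sub_rev (T _)]
          exact add_le_add h7 (hpt n)
  obtain ⟨R, hR⟩ := hbdd
  have : FiniteDimensional ℝ (WithLp 2 (X × ℝ)) :=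
    (WithLp.linearEquiv 2 ℝ (X × ℝ)).symm.finiteDimensional
  have : ProperSpace (WithLp 2 (X × ℝ)) := FiniteDimensional.proper_real _
  obtain ⟨u, -, φ, hφ, hu⟩ := (isCompact_closedBall (pt (a • xs) 1) R).tendsto_subseq hR
  set p := fstE u with hp_def
  have hxφ : Tendsto (fun k => x (φ k)) atTop (𝓝 p) := (continuous_fstE.tendsto u).comp hu
  have hyφ : Tendsto (fun k => y (φ k)) atTop (𝓝 p) := by
    simpa using (hyx.comp hφ.tendsto_atTop).add hxφ
  have huT : u = T (pt p 1) :=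
    T_closed hκ hT hfin ((continuous_pt_one.tendsto p).comp hyφ) hu
  have hfix : fstE (T (pt p 1)) = p := by rw [← huT]
  have hp : f ((1 + η) • p) = ENNReal.ofReal η :=
    min_of_fixed hκ hT hη hκpos hηpos _ hq p hfix
  have hyp2 : Tendsto (fun n => ‖y n - p‖ ^ 2) atTop (𝓝 0) := by
    obtain ⟨L, hL⟩ := hlim p hp
    have h0 : Tendsto (fun k => ‖y (φ k) - p‖ ^ 2) atTop (𝓝 0) := by
      simpa using ((hyφ.sub_const p).norm.pow 2)
    rwa [tendsto_nhds_unique (hL.comp hφ.tendsto_atTop) h0] at hL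
  have hyp : Tendsto y atTop (𝓝 p) := by
    rw [tendsto_iff_norm_sub_tendsto_zero]
    simpa using hyp2.sqrt
  -- The optimal values are squeezed to `η / (1 + η)`, which determines the limit of `lam`.
  have hρ2 : Tendsto (fun n => ‖pt (y n) 1 - T (pt (y n) 1)‖ ^ 2) atTop (𝓝 ((η * a) ^ 2)) := by
    have hup : Tendsto (fun n => ‖y n - p‖ ^ 2 + (η * a) ^ 2) atTop (𝓝 ((η * a) ^ 2)) := by
      simpa using hyp2.add_const ((η * a) ^ 2)
    refine tendsto_of_tendsto_of_tendsto_of_le_of_le tendsto_const_nhds hup (fun n => ?_)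
      fun n => (hest p hp n).2.2.2.2
    have := (hest p hp n).2.2.1
    have : 0 ≤ η * a := by positivity
    simp only
    gcongr
  have hρ : Tendsto (fun n => ‖pt (y n) 1 - T (pt (y n) 1)‖) atTop (𝓝 (η * a)) := by
    have h := hρ2.sqrt
    rw [Real.sqrt_sq (by positivity)] at h
    simpa using h
  have hηa : η * a = 1 - a := by linarith
  have hlam1 : Tendsto (fun n => |1 - lam (n + 1)|) atTop (𝓝 (η * a)) := by
    have h := (hρ2.sub hyx2).sqrt
    rw [sub_zero, Real.sqrt_sq (by positivity)] at h
    refine h.congr fun n => ?_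
    rw [(hest p hp n).1, add_sub_cancel_left, Real.sqrt_sq_eq_abs]
  have hlt : ∀ᶠ n in atTop, lam (n + 1) < 1 := by
    have : η * a < η := by nlinarith
    filter_upwards [hρ.eventually (gt_mem_nhds this)] with n hn
    have := (hest p hp n).2.1
    nlinarith
  have hlamt : Tendsto lam atTop (𝓝 a) := by
    rw [← tendsto_add_atTop_iff_nat 1]
    have h := hlam1.const_sub 1
    rw [hηa, sub_sub_cancel] at h
    refine h.congr' ?_
    filter_upwards [hlt] with n hn
    rw [abs_of_pos (by linarith), sub_sub_cancel]
  refine ⟨p, hyp, ?_, ?_, ?_, fun w => ?_⟩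
  · rw [PS, hfix]
  · rwa [one_div]
  · have h := (hlamt.inv₀ ha.ne').smul hyp
    rwa [ha_def, inv_inv] at h
  · rw [hp, ← hη]
    exact iInf_le _ _
end
end
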